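/- For all integers k ≥ 4 and n ≥ 1, the number of (4,3)-regular overpartitions satisfies R̄_{4,3}(2^{k+2}·n) ≡ 0 (mod 2^{3k+2}); moreover, for all integers k ≥ 4 and n ≥ 0, R̄_{4,3}(2^{k+1}(4n+3)) ≡ 0 (mod 2^{3k+1}) and R̄_{4,3}(2^{k+1}(8n+5)) ≡ 0 (mod 2^{3k}). -/

import Mathlib

/-- Number of partitions of `a` with no part divisible by `ℓ` or `μ`
(the non-overlined parts of an `(ℓ,μ)`-regular overpartition). -/
def regularCount (ℓ μ a : ℕ) : ℕ :=
  Fintype.card {p : a.Partition // ∀ i ∈ p.parts, ¬ ℓ ∣ i ∧ ¬ μ ∣ i}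

/-- Number of partitions of `a` into distinct parts with no part divisible by `ℓ` or `μ`
(the overlined parts of an `(ℓ,μ)`-regular overpartition). -/
def regularDistinctCount (ℓ μ a : ℕ) : ℕ :=
  Fintype.card {p : a.Partition // p.parts.Nodup ∧ ∀ i ∈ p.parts, ¬ ℓ ∣ i ∧ ¬ μ ∣ i}

/-- `Rbar ℓ μ n` is the number of `(ℓ,μ)`-regular overpartitions of `n`: pairs `(λ, δ)`
where `λ` is a partition, `δ` is a partition into distinct parts, `|λ| + |δ| = n`,
and no part of `λ` or `δ` is divisible by `ℓ` or by `μ`. -/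
def Rbar (ℓ μ n : ℕ) : ℕ :=
  ∑ ab ∈ Finset.HasAntidiagonal.antidiagonal n, regularCount ℓ μ ab.1 * regularDistinctCount ℓ μ ab.2

/-!
The generating function of `Rbar 4 3` is the theta quotient `φ(-q³) φ(-q⁴) / (φ(-q) φ(-q¹²))`.
Write `U` for the operator `∑ a(n) qⁿ ↦ ∑ a(2n) qⁿ`. Dissections of theta functions show that `U`
sends this quotient to `φ(q) / φ(-q)`, then to `φ(q)² / φ(-q)²`, then to `1 + 32 h₄` and
`1 + 256 h₂`, where `h₄ = (η(4τ) / η(τ))⁸` and `h₂ = (η(2τ) / η(τ))²⁴`. By the modular equation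
relating `h₂(q)` and `h₂(q²)`, `U` maps `h₂ ℤ[256 h₂]` into `8 h₂ ℤ[256 h₂]`, so each further
application of `U` gains a factor `8`. Finally `h₂ ≡ q ψ(q⁴)²` modulo `4`, and the coefficients
of `q ψ(q⁴)²` vanish at `4n + 3` and are even at `8n + 5`, because `ψ² = φ(q) ψ(q²) ≡ ψ(q²)`
modulo `2`.
-/

open PowerSeries Filter
open scoped PowerSeries.WithPiTopology

section Dissection

variable {R : Type*} [CommRing R]

/-- The substitution `f(q) ↦ f(q ^ m)`: Mathlib's `PowerSeries.expand` with the condition `m ≠ 0`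
found by instance search. -/
noncomputable abbrev dilate (m : ℕ) [NeZero m] : R⟦X⟧ →ₐ[R] R⟦X⟧ :=
  expand m (NeZero.ne m)

lemma dilate_dilate (m n : ℕ) [NeZero m] [NeZero n] (f : R⟦X⟧) :
    dilate m (dilate n f) = dilate (m * n) f :=
  (expand_mul m (NeZero.ne m) n (NeZero.ne n) f).symm

lemma dilate_injective (m : ℕ) [NeZero m] : Function.Injective (dilate m : R⟦X⟧ →ₐ[R] R⟦X⟧) := by
  intro f g h
  ext n
  simpa only [coeff_expand_mul] using congrArg (coeff (m * n)) h

lemma evalNegHom_dilate_of_even {m : ℕ} [NeZero m] (hm : Even m) (f : R⟦X⟧) :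
    evalNegHom (dilate m f) = dilate m f := by
  ext n
  rw [evalNegHom, coeff_rescale, coeff_expand]
  split_ifs with h
  · rw [(hm.trans_dvd h).neg_one_pow, one_mul]
  · rw [mul_zero]

/-- Atkin's operator `U_p`, which sends `∑ a(n) q ^ n` to `∑ a(pn) q ^ n`. -/
noncomputable def atkinU (p : ℕ) : R⟦X⟧ →ₗ[R] R⟦X⟧ where
  toFun f := mk fun n ↦ coeff (p * n) f
  map_add' f g := by ext; simp
  map_smul' r f := by ext; simp

@[simp]
lemma coeff_atkinU (p n : ℕ) (f : R⟦X⟧) : coeff n (atkinU p f) = coeff (p * n) f := by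
  simp [atkinU]

lemma coeff_atkinU_iterate (p j n : ℕ) (f : R⟦X⟧) :
    coeff n ((atkinU p)^[j] f) = coeff (p ^ j * n) f := by
  induction j generalizing f with
  | zero => simp
  | succ j ih => rw [Function.iterate_succ_apply, ih, coeff_atkinU, pow_succ', mul_assoc]

lemma atkinU_dilate_mul (p : ℕ) [NeZero p] (f g : R⟦X⟧) :
    atkinU p (dilate p f * g) = f * atkinU p g := by
  have hp := Nat.pos_of_neZero p
  ext n
  simp only [coeff_atkinU, coeff_mul]
  symm
  refine Finset.sum_of_injOn (fun x ↦ (p * x.1, p * x.2)) ?_ ?_ ?_ ?_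
  · rintro ⟨a, b⟩ - ⟨c, d⟩ - h
    simpa [hp.ne'] using h
  · intro x hx
    simp_all [← mul_add]
  · rintro ⟨a, b⟩ hab himage
    rw [coeff_expand, if_neg, zero_mul]
    rintro ⟨a, rfl⟩
    rw [Finset.HasAntidiagonal.mem_antidiagonal] at hab
    obtain ⟨b, rfl⟩ : p ∣ b := (Nat.dvd_add_right ⟨a, rfl⟩).1 (hab ▸ dvd_mul_right p n)
    refine himage ⟨(a, b), ?_, rfl⟩
    simpa [← mul_add, hp.ne'] using hab
  · rintro ⟨a, b⟩ -
    simp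

lemma atkinU_one (p : ℕ) [NeZero p] : atkinU p (1 : R⟦X⟧) = 1 := by
  ext n
  simp [coeff_one, NeZero.ne p]

lemma atkinU_dilate (p : ℕ) [NeZero p] (f : R⟦X⟧) : atkinU p (dilate p f) = f := by
  simpa [atkinU_one] using atkinU_dilate_mul p f 1

lemma atkinU_monomial_mul (p : ℕ) [NeZero p] (n : ℕ) (r : R) :
    atkinU p (monomial (p * n) r) = monomial n r := by
  rw [← expand_monomial p (NeZero.ne p), atkinU_dilate]

lemma atkinU_monomial_of_not_dvd {p n : ℕ} (h : ¬p ∣ n) (r : R) :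
    atkinU p (monomial n r) = 0 := by
  ext m
  rw [coeff_atkinU, coeff_monomial, if_neg (fun e ↦ h ⟨m, e.symm⟩), map_zero]

lemma atkinU_X_mul_dilate {p : ℕ} [NeZero p] (hp : p ≠ 1) (f : R⟦X⟧) :
    atkinU p (X * dilate p f) = 0 := by
  rw [mul_comm, atkinU_dilate_mul, X_eq, atkinU_monomial_of_not_dvd (Nat.dvd_one.not.2 hp),
    mul_zero]

lemma atkinU_natCast_mul (p c : ℕ) (f : R⟦X⟧) :
    atkinU p ((c : R⟦X⟧) * f) = (c : R⟦X⟧) * atkinU p f := by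
  simp only [← nsmul_eq_mul, map_nsmul]

lemma atkinU_ofNat_mul (p c : ℕ) [c.AtLeastTwo] (f : R⟦X⟧) :
    atkinU p ((ofNat(c) : R⟦X⟧) * f) = (ofNat(c) : R⟦X⟧) * atkinU p f :=
  atkinU_natCast_mul p c f

variable [TopologicalSpace R]

lemma continuous_atkinU (p : ℕ) : Continuous (atkinU p : R⟦X⟧ → R⟦X⟧) := by
  refine continuous_iff_continuousAt.2 fun f ↦
    (WithPiTopology.tendsto_iff_coeff_tendsto ..).2 fun n ↦ ?_
  simpa only [coeff_atkinU] using (WithPiTopology.continuous_coeff R (p * n)).tendsto f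

lemma continuous_dilate (m : ℕ) [NeZero m] : Continuous (dilate m : R⟦X⟧ → R⟦X⟧) := by
  refine continuous_iff_continuousAt.2 fun f ↦
    (WithPiTopology.tendsto_iff_coeff_tendsto ..).2 fun n ↦ ?_
  simp only [coeff_expand]
  split_ifs
  · exact (WithPiTopology.continuous_coeff R (n / m)).tendsto f
  · exact tendsto_const_nhds

lemma continuous_evalNegHom [ContinuousMul R] :
    Continuous (evalNegHom : R⟦X⟧ → R⟦X⟧) := by
  refine continuous_iff_continuousAt.2 fun f ↦
    (WithPiTopology.tendsto_iff_coeff_tendsto ..).2 fun n ↦ ?_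
  simp only [evalNegHom, coeff_rescale]
  exact ((WithPiTopology.continuous_coeff R n).tendsto f).const_mul _

lemma summable_monomial_of_tendsto_cofinite {ι : Type*} {w : ι → ℕ} (hw : Tendsto w cofinite atTop)
    (r : ι → R) : Summable fun i ↦ monomial (w i) (r i) := by
  refine (WithPiTopology.summable_iff_summable_coeff R).2 fun n ↦
    summable_of_hasFiniteSupport ?_
  refine (eventually_cofinite.1 (hw.eventually_gt_atTop n)).subset fun i hi hn ↦ hi ?_
  exact (coeff_monomial ..).trans (if_neg hn.ne)

end Dissection

lemma tendsto_add_cofinite_atTop {ι κ : Type*} {u : ι → ℕ} {v : κ → ℕ}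
    (hu : Tendsto u cofinite atTop) (hv : Tendsto v cofinite atTop) :
    Tendsto (fun x : ι × κ ↦ u x.1 + v x.2) cofinite atTop := by
  refine tendsto_atTop.2 fun n ↦ eventually_cofinite.2 ?_
  refine ((eventually_cofinite.1 (hu.eventually_ge_atTop n)).prod
    (eventually_cofinite.1 (hv.eventually_ge_atTop n))).subset fun x hx ↦ ?_
  simp only [Set.mem_prod, Set.mem_ofPred_eq] at hx ⊢
  omega

lemma hasSum_two_mul_natCast_succ_of_even {A : Type*} [Ring A] [TopologicalSpace A]
    [IsTopologicalRing A] {f : ℤ → A} {s : A} (h : HasSum f s) (hf : Function.Even f) :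
    HasSum (fun n : ℕ ↦ 2 * f (n + 1)) (s - f 0) := by
  have h' := (hasSum_nat_add_iff' 1).2 h.nat_add_neg
  simp only [hf _, ← two_mul, Finset.sum_range_one, Nat.cast_zero, Nat.cast_add_one] at h'
  rwa [two_mul (f 0), add_sub_add_right_eq_sub] at h'

lemma hasSum_monomial_mul {R : Type*} [CommRing R] [TopologicalSpace R] [IsTopologicalRing R]
    [T3Space R⟦X⟧] {ι κ : Type*} {u : ι → ℕ} {v : κ → ℕ} {r : ι → R} {s : κ → R} {f g : R⟦X⟧}
    (hu : Tendsto u cofinite atTop) (hv : Tendsto v cofinite atTop)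
    (hf : HasSum (fun i ↦ monomial (u i) (r i)) f)
    (hg : HasSum (fun j ↦ monomial (v j) (s j)) g) :
    HasSum (fun x : ι × κ ↦ monomial (u x.1 + v x.2) (r x.1 * s x.2)) (f * g) := by
  have h := hf.mul hg
  simp only [monomial_mul_monomial] at h
  exact h (summable_monomial_of_tendsto_cofinite (tendsto_add_cofinite_atTop hu hv) _)

lemma hasSum_monomial_dilate {R : Type*} [CommRing R] [TopologicalSpace R] {ι : Type*}
    {u : ι → ℕ} {r : ι → R} {f : R⟦X⟧} (m : ℕ) [NeZero m]
    (hf : HasSum (fun i ↦ monomial (u i) (r i)) f) :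
    HasSum (fun i ↦ monomial (m * u i) (r i)) (dilate m f) := by
  simpa only [Function.comp_def, expand_monomial] using hf.map (dilate m) (continuous_dilate m)

section ThetaFunctions

/-- Ramanujan's theta function `φ(q) = ∑ q ^ (n ^ 2)`, summed over all integers `n`. -/
noncomputable def ramanujanPhi : ℤ⟦X⟧ :=
  ∑' n : ℤ, monomial (n.natAbs ^ 2) 1

/-- Ramanujan's theta function `ψ(q) = ∑ q ^ (n (n + 1) / 2)`, summed over `n ≥ 0`. -/
noncomputable def ramanujanPsi : ℤ⟦X⟧ :=
  ∑' n : ℕ, monomial (n * (n + 1) / 2) 1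

local notation "φ" => ramanujanPhi
local notation "φ₋" => evalNegHom ramanujanPhi
local notation "ψ" => ramanujanPsi

lemma tendsto_natAbs_sq_cofinite : Tendsto (fun n : ℤ ↦ n.natAbs ^ 2) cofinite atTop := by
  refine tendsto_atTop.2 fun b ↦ eventually_cofinite.2 ?_
  refine (Set.finite_Icc (-b : ℤ) b).subset fun n hn ↦ ?_
  have : n.natAbs ≤ n.natAbs ^ 2 := Nat.le_self_pow two_ne_zero _
  simp only [Set.mem_ofPred_eq, Set.mem_Icc] at hn ⊢
  omega

lemma hasSum_ramanujanPhi : HasSum (fun n : ℤ ↦ monomial (n.natAbs ^ 2) 1) φ :=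
  (summable_monomial_of_tendsto_cofinite tendsto_natAbs_sq_cofinite _).hasSum

lemma hasSum_ramanujanPsi : HasSum (fun n : ℕ ↦ monomial (n * (n + 1) / 2) 1) ψ := by
  refine (summable_monomial_of_tendsto_cofinite ?_ _).hasSum
  rw [Nat.cofinite_eq_atTop]
  refine tendsto_atTop_mono (fun n ↦ ?_) tendsto_id
  rw [Nat.le_div_iff_mul_le two_pos]
  rcases n.eq_zero_or_pos with rfl | hn
  · rfl
  · exact Nat.mul_le_mul_left n (by omega)

lemma hasSum_evalNegHom_ramanujanPhi :
    HasSum (fun n : ℤ ↦ monomial (n.natAbs ^ 2) (n.negOnePow : ℤ)) φ₋ := by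
  convert hasSum_ramanujanPhi.map evalNegHom continuous_evalNegHom using 2 with n
  ext d
  simp only [Function.comp_apply, evalNegHom, coeff_rescale, coeff_monomial]
  split_ifs with h
  · rcases n.even_or_odd with hn | hn
    · rw [Int.negOnePow_even n hn, h, (hn.natAbs.pow_of_ne_zero two_ne_zero).neg_one_pow]
      simp
    · rw [Int.negOnePow_odd n hn, h, (hn.natAbs.pow).neg_one_pow]
      simp
  · simp

lemma hasSum_ramanujanPhi_sub_one :
    HasSum (fun n : ℕ ↦ 2 * monomial ((n + 1) ^ 2) 1) (φ - 1) := by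
  have h := hasSum_two_mul_natCast_succ_of_even hasSum_ramanujanPhi fun n ↦ by rw [Int.natAbs_neg]
  simpa only [← Nat.cast_add_one, Int.natAbs_natCast, Int.natAbs_zero, zero_pow two_ne_zero,
    monomial_zero_eq_C_apply, map_one] using h

lemma exists_ramanujanPhi_eq_one_add : ∃ f, φ = 1 + 2 * X * f := by
  have hs : Summable fun n : ℕ ↦ (monomial (n * (n + 2)) 1 : ℤ⟦X⟧) := by
    refine summable_monomial_of_tendsto_cofinite ?_ _
    rw [Nat.cofinite_eq_atTop]
    exact tendsto_atTop_mono (fun n ↦ Nat.le_mul_of_pos_right n (Nat.succ_pos _)) tendsto_id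
  obtain ⟨f, hf⟩ := hs
  refine ⟨f, sub_eq_iff_eq_add'.1 (hasSum_ramanujanPhi_sub_one.unique ?_)⟩
  refine (hf.mul_left (2 * X)).congr_fun fun n ↦ ?_
  rw [mul_assoc, X_eq, monomial_mul_monomial, one_mul]
  ring_nf

lemma ramanujanPhi_eq_dilate_four_add : φ = dilate 4 φ + 2 * X * dilate 8 ψ := by
  have hodd : HasSum (fun n : ℕ ↦ 2 * monomial ((2 * n + 1) ^ 2) 1) (2 * X * dilate 8 ψ) := by
    have h := (hasSum_ramanujanPsi.map (dilate 8) (continuous_dilate 8)).mul_left (2 * X)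
    refine h.congr_fun fun n ↦ ?_
    have h : 8 * (n * (n + 1) / 2) + 1 = (2 * n + 1) ^ 2 := by
      have := Nat.div_mul_cancel (Nat.even_mul_succ_self n).two_dvd
      linarith
    simp only [Function.comp_apply, expand_monomial]
    rw [mul_assoc, X_eq, monomial_mul_monomial, add_comm 1, h, one_mul]
  have heven : HasSum (fun n : ℕ ↦ 2 * monomial ((2 * n + 1 + 1) ^ 2) 1) (dilate 4 φ - 1) := by
    have h := hasSum_ramanujanPhi_sub_one.map (dilate 4) (continuous_dilate 4)
    rw [map_sub, map_one] at h
    convert h using 2 with n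
    simp only [Function.comp_apply, map_mul, map_ofNat, expand_monomial]
    ring_nf
  have h := hasSum_ramanujanPhi_sub_one.unique (hodd.even_add_odd heven)
  linear_combination h

lemma atkinU_two_ramanujanPhi_sq : atkinU 2 (φ ^ 2) = φ ^ 2 := by
  have hsq : HasSum (fun x : ℤ × ℤ ↦ monomial (x.1.natAbs ^ 2 + x.2.natAbs ^ 2) 1) (φ ^ 2) := by
    simpa only [sq φ, one_mul] using hasSum_monomial_mul tendsto_natAbs_sq_cofinite
      tendsto_natAbs_sq_cofinite hasSum_ramanujanPhi hasSum_ramanujanPhi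
  have hU := hsq.map (atkinU 2) (continuous_atkinU 2)
  let rotate : ℤ × ℤ → ℤ × ℤ := fun x ↦ (x.1 + x.2, x.1 - x.2)
  have hrotate : Function.Injective rotate := by
    rintro ⟨a, b⟩ ⟨c, d⟩ h
    simp only [rotate, Prod.mk.injEq] at h ⊢
    omega
  refine ((hrotate.hasSum_iff ?_).2 hU).unique (hsq.congr_fun fun x ↦ ?_)
  · rintro ⟨a, b⟩ hx
    refine atkinU_monomial_of_not_dvd (fun hdvd ↦ hx ?_) _
    have hparity : Even a ↔ Even b := by
      simpa [← even_iff_two_dvd, Nat.even_add, Nat.even_pow] using hdvd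
    rw [Int.even_iff, Int.even_iff] at hparity
    refine ⟨((a + b) / 2, (a - b) / 2), ?_⟩
    simp only [rotate, Prod.mk.injEq]
    omega
  · have hnorm : (x.1 + x.2).natAbs ^ 2 + (x.1 - x.2).natAbs ^ 2 =
        2 * (x.1.natAbs ^ 2 + x.2.natAbs ^ 2) := by
      zify
      simp only [sq_abs]
      ring
    simp only [Function.comp_apply, rotate, hnorm, atkinU_monomial_mul]

/-- The binary quadratic form `a ^ 2 + a b + b ^ 2`, the norm form of the Eisenstein integers. -/
def eisensteinNorm (x : ℤ × ℤ) : ℕ :=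
  (x.1 ^ 2 + x.1 * x.2 + x.2 ^ 2).toNat

lemma natCast_eisensteinNorm (x : ℤ × ℤ) :
    (eisensteinNorm x : ℤ) = x.1 ^ 2 + x.1 * x.2 + x.2 ^ 2 :=
  Int.toNat_of_nonneg (by nlinarith [sq_nonneg (x.1 + x.2), sq_nonneg x.1, sq_nonneg x.2])

lemma tendsto_eisensteinNorm_cofinite : Tendsto eisensteinNorm cofinite atTop := by
  have hsq := tendsto_add_cofinite_atTop tendsto_natAbs_sq_cofinite tendsto_natAbs_sq_cofinite
  refine tendsto_atTop_mono (fun x ↦ ?_) (Nat.tendsto_div_const_atTop two_ne_zero |>.comp hsq)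
  have : x.1.natAbs ^ 2 + x.2.natAbs ^ 2 ≤ 2 * eisensteinNorm x := by
    zify
    rw [natCast_eisensteinNorm, sq_abs, sq_abs]
    nlinarith [sq_nonneg (x.1 + x.2)]
  exact Nat.div_le_of_le_mul this

/-- The terms with `a`, `b` both even cancel, and automorphisms of the form carry the sum over
each of the other parity classes to the sum `s` over `a` odd, `b` even; the total is
`2 * s - s - s`. -/
lemma hasSum_eisensteinNorm_sign : HasSum (fun x : ℤ × ℤ ↦ monomial (eisensteinNorm x)
    ((x.2.negOnePow : ℤ) - if Even x.2 then (x.1.negOnePow : ℤ) else 0)) 0 := by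
  let oddEven : ℤ × ℤ → ℤ := fun x ↦ if ¬Even x.1 ∧ Even x.2 then 1 else 0
  obtain ⟨s, hs⟩ := summable_monomial_of_tendsto_cofinite tendsto_eisensteinNorm_cofinite oddEven
  let shear : ℤ × ℤ ≃ ℤ × ℤ :=
    ⟨fun x ↦ (x.1, -x.1 - x.2), fun x ↦ (x.1, -x.1 - x.2), fun x ↦ by simp, fun x ↦ by simp⟩
  have hswap := (Equiv.prodComm ℤ ℤ).hasSum_iff.2 hs
  have hshear := shear.hasSum_iff.2 hs
  have htotal := ((hs.mul_left 2).sub hswap).sub hshear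
  rw [two_mul, add_sub_cancel_right, sub_self] at htotal
  refine htotal.congr_fun fun ⟨a, b⟩ ↦ ?_
  have hnorm_swap : eisensteinNorm (b, a) = eisensteinNorm (a, b) := by
    zify; simp only [natCast_eisensteinNorm]; ring
  have hnorm_shear : eisensteinNorm (a, -a - b) = eisensteinNorm (a, b) := by
    zify; simp only [natCast_eisensteinNorm]; ring
  simp only [Function.comp_apply, shear, Equiv.prodComm_apply, Prod.swap_prod_mk,
    Equiv.coe_fn_mk, hnorm_swap, hnorm_shear]
  rw [← map_ofNat (C (R := ℤ)) 2, ← monomial_zero_eq_C_apply, monomial_mul_monomial, zero_add,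
    ← map_sub, ← map_sub]
  congr 1
  by_cases ha : Even a <;> by_cases hb : Even b <;>
    simp [oddEven, Int.even_sub, ha, hb, Int.negOnePow_even, Int.negOnePow_odd,
      ← Int.not_even_iff_odd]

lemma tendsto_three_mul_natAbs_sq_cofinite :
    Tendsto (fun n : ℤ ↦ 3 * n.natAbs ^ 2) cofinite atTop :=
  tendsto_natAbs_sq_cofinite.const_mul_atTop' three_pos

lemma hasSum_atkinU_two_ramanujanPhi_mul_dilate_three :
    HasSum (fun x : ℤ × ℤ ↦ monomial (2 * eisensteinNorm x) (x.2.negOnePow : ℤ))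
      (atkinU 2 (φ * dilate 3 φ₋)) := by
  have h := (hasSum_monomial_mul tendsto_natAbs_sq_cofinite tendsto_three_mul_natAbs_sq_cofinite
    hasSum_ramanujanPhi (hasSum_monomial_dilate 3 hasSum_evalNegHom_ramanujanPhi)).map
      (atkinU 2) (continuous_atkinU 2)
  let f : ℤ × ℤ → ℤ × ℤ := fun x ↦ (2 * x.1 + x.2, x.2)
  have hf : Function.Injective f := by
    rintro ⟨a, b⟩ ⟨c, d⟩ h
    simp only [f, Prod.mk.injEq] at h ⊢
    omega
  refine ((hf.hasSum_iff ?_).2 h).congr_fun fun x ↦ ?_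
  · rintro ⟨a, b⟩ hx
    refine atkinU_monomial_of_not_dvd (fun hdvd ↦ hx ?_) _
    have hparity : Even a ↔ Even b := by
      simpa [← even_iff_two_dvd, Nat.even_add, Nat.even_mul, Nat.even_pow,
        show ¬Even 3 by decide] using hdvd
    rw [Int.even_iff, Int.even_iff] at hparity
    exact ⟨((a - b) / 2, b), Prod.ext (by simp only [f]; omega) rfl⟩
  · have hnorm : (2 * x.1 + x.2).natAbs ^ 2 + 3 * x.2.natAbs ^ 2 =
        2 * (2 * eisensteinNorm x) := by
      zify
      simp only [sq_abs, natCast_eisensteinNorm]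
      ring
    simp only [Function.comp_apply, f, hnorm, atkinU_monomial_mul, one_mul]

lemma hasSum_evalNegHom_ramanujanPhi_mul_dilate_three :
    HasSum (fun x : ℤ × ℤ ↦ monomial (eisensteinNorm x)
      (if Even x.2 then (x.1.negOnePow : ℤ) else 0)) (φ₋ * dilate 3 φ₋) := by
  have h := hasSum_monomial_mul tendsto_natAbs_sq_cofinite tendsto_three_mul_natAbs_sq_cofinite
    hasSum_evalNegHom_ramanujanPhi (hasSum_monomial_dilate 3 hasSum_evalNegHom_ramanujanPhi)
  let f : ℤ × ℤ → ℤ × ℤ := fun x ↦ (x.1 - x.2, 2 * x.2)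
  have hf : Function.Injective f := by
    rintro ⟨a, b⟩ ⟨c, d⟩ h
    simp only [f, Prod.mk.injEq] at h ⊢
    omega
  refine (hf.hasSum_iff ?_).1 (h.congr_fun fun x ↦ ?_)
  · rintro ⟨a, b⟩ hx
    rw [if_neg, map_zero]
    rintro ⟨c, rfl⟩
    exact hx ⟨(a + c, c), by simp only [f, Prod.mk.injEq]; omega⟩
  · have hnorm : eisensteinNorm (x.1 - x.2, 2 * x.2) = x.1.natAbs ^ 2 + 3 * x.2.natAbs ^ 2 := by
      zify
      simp only [sq_abs, natCast_eisensteinNorm]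
      ring
    simp [f, hnorm, Int.negOnePow_sub]

lemma atkinU_two_ramanujanPhi_mul_dilate_three :
    atkinU 2 (φ * dilate 3 φ₋) = dilate 2 (φ₋ * dilate 3 φ₋) := by
  have h := (hasSum_atkinU_two_ramanujanPhi_mul_dilate_three.sub
    (hasSum_monomial_dilate 2 hasSum_evalNegHom_ramanujanPhi_mul_dilate_three)).unique
      ((hasSum_monomial_dilate 2 hasSum_eisensteinNorm_sign).congr_fun fun x ↦ (map_sub ..).symm)
  rwa [map_zero, sub_eq_zero] at h

lemma evalNegHom_ramanujanPhi_eq_dilate_four_sub :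
    φ₋ = dilate 4 φ - 2 * X * dilate 8 ψ := by
  have h := congrArg evalNegHom ramanujanPhi_eq_dilate_four_add
  simp only [map_add, map_mul, map_ofNat, evalNegHom_X,
    evalNegHom_dilate_of_even (show Even 4 by decide),
    evalNegHom_dilate_of_even (show Even 8 by decide)] at h
  linear_combination h

/-- Both sides compute `U₂(φ ^ 2)`. -/
lemma ramanujanPhi_sq : φ ^ 2 = dilate 2 φ ^ 2 + 4 * X * dilate 4 ψ ^ 2 := by
  have h : φ ^ 2 = dilate 2 (dilate 2 φ ^ 2 + 4 * X * dilate 4 ψ ^ 2) * 1 +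
      X * dilate 2 (4 * dilate 2 φ * dilate 4 ψ) := by
    conv_lhs => rw [ramanujanPhi_eq_dilate_four_add]
    simp only [map_add, map_mul, map_pow, map_ofNat, expand_X, dilate_dilate, Nat.reduceMul]
    ring
  rw [← atkinU_two_ramanujanPhi_sq, h, map_add, atkinU_dilate_mul, atkinU_one,
    atkinU_X_mul_dilate (by decide)]
  ring

lemma ramanujanPhi_mul_dilate_two_ramanujanPsi : φ * dilate 2 ψ = ψ ^ 2 := by
  have h1 := ramanujanPhi_eq_dilate_four_add
  have h2 := ramanujanPhi_sq
  have h3 := congrArg (dilate 2) ramanujanPhi_sq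
  simp only [map_add, map_mul, map_pow, map_ofNat, expand_X, dilate_dilate, Nat.reduceMul] at h3
  have hX : (4 * X : ℤ⟦X⟧) ≠ 0 := by
    rw [← map_ofNat (C (R := ℤ)) 4]
    exact mul_ne_zero ((map_ne_zero_iff C C_injective).2 four_ne_zero) X_ne_zero
  refine dilate_injective 4 (mul_left_cancel₀ hX ?_)
  simp only [map_mul, map_pow, dilate_dilate, Nat.reduceMul]
  linear_combination h2 - (φ + dilate 4 φ + 2 * X * dilate 8 ψ) * h1 + h3

lemma evalNegHom_ramanujanPhi_sq : φ₋ ^ 2 = dilate 2 φ ^ 2 - 4 * X * dilate 4 ψ ^ 2 := by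
  rw [← map_pow, ramanujanPhi_sq]
  simp only [map_add, map_mul, map_pow, map_ofNat, evalNegHom_X,
    evalNegHom_dilate_of_even (show Even 2 by decide),
    evalNegHom_dilate_of_even (show Even 4 by decide)]
  ring

lemma ramanujanPhi_sq_sub_sq : φ ^ 2 - φ₋ ^ 2 = 8 * X * dilate 4 ψ ^ 2 := by
  rw [ramanujanPhi_sq, evalNegHom_ramanujanPhi_sq]
  ring

lemma ramanujanPhi_mul_evalNegHom : φ * φ₋ = dilate 2 φ₋ ^ 2 := by
  have h := congrArg (dilate 2) evalNegHom_ramanujanPhi_sq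
  simp only [map_sub, map_mul, map_pow, map_ofNat, expand_X, dilate_dilate, Nat.reduceMul] at h
  linear_combination evalNegHom_ramanujanPhi_eq_dilate_four_sub * φ +
    (dilate 4 φ - 2 * X * dilate 8 ψ) * ramanujanPhi_eq_dilate_four_add - h

lemma ramanujanPhi_pow_four :
    φ ^ 4 = dilate 2 (φ ^ 4 + 16 * X * dilate 2 ψ ^ 4) + X * dilate 2 (8 * ψ ^ 4) := by
  have h := congrArg (dilate 2) ramanujanPhi_mul_dilate_two_ramanujanPsi
  simp only [map_add, map_mul, map_pow, map_ofNat, expand_X, dilate_dilate, Nat.reduceMul] at h ⊢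
  linear_combination (φ ^ 2 + dilate 2 φ ^ 2 + 4 * X * dilate 4 ψ ^ 2) * ramanujanPhi_sq +
    8 * X * (dilate 2 φ * dilate 4 ψ + dilate 2 ψ ^ 2) * h

lemma ramanujanPhi_pow_four_sub_pow_four : φ ^ 4 - φ₋ ^ 4 = 16 * X * dilate 2 ψ ^ 4 := by
  have h := congrArg (dilate 2) ramanujanPhi_mul_dilate_two_ramanujanPsi
  simp only [map_mul, map_pow, dilate_dilate, Nat.reduceMul] at h
  rw [show φ ^ 4 = (φ ^ 2) ^ 2 by ring, show φ₋ ^ 4 = (φ₋ ^ 2) ^ 2 by ring, ramanujanPhi_sq,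
    evalNegHom_ramanujanPhi_sq]
  linear_combination 16 * X * (dilate 2 φ * dilate 4 ψ + dilate 2 ψ ^ 2) * h

section GaussIdentity

lemma tendsto_of_X_pow_dvd_sub {R : Type*} [Ring R] [TopologicalSpace R] {u v : ℕ → R⟦X⟧}
    {f : R⟦X⟧} (hv : Tendsto v atTop (nhds f)) (h : ∀ n, X ^ (n + 1) ∣ u n - v n) :
    Tendsto u atTop (nhds f) := by
  rw [WithPiTopology.tendsto_iff_coeff_tendsto] at hv ⊢
  refine fun d ↦ (hv d).congr' ?_
  filter_upwards [eventually_ge_atTop d] with n hn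
  have hd := X_pow_dvd_iff.1 (h n) d (by omega)
  rw [map_sub, sub_eq_zero] at hd
  exact hd.symm

/-- The `q`-Pochhammer symbol `(q; q)_n = (1 - q) (1 - q ^ 2) ⋯ (1 - q ^ n)`. -/
noncomputable def qPochhammer (n : ℕ) : ℤ⟦X⟧ :=
  ∏ i ∈ Finset.range n, (1 - X ^ (i + 1))

/-- The reciprocal of `(q; q)_n`. -/
noncomputable def invQPochhammer (n : ℕ) : ℤ⟦X⟧ :=
  invOfUnit (qPochhammer n) 1

lemma qPochhammer_succ (n : ℕ) : qPochhammer (n + 1) = qPochhammer n * (1 - X ^ (n + 1)) :=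
  Finset.prod_range_succ ..

lemma qPochhammer_mul_invQPochhammer (n : ℕ) : qPochhammer n * invQPochhammer n = 1 :=
  mul_invOfUnit _ _ (by simp [qPochhammer])

lemma one_sub_X_pow_mul_invQPochhammer_succ (n : ℕ) :
    (1 - X ^ (n + 1)) * invQPochhammer (n + 1) = invQPochhammer n := by
  have h := qPochhammer_mul_invQPochhammer (n + 1)
  rw [qPochhammer_succ] at h
  linear_combination invQPochhammer n * h -
    (1 - X ^ (n + 1)) * invQPochhammer (n + 1) * qPochhammer_mul_invQPochhammer n

lemma X_pow_dvd_qPochhammer_sub {m n : ℕ} (h : m ≤ n) :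
    X ^ (m + 1) ∣ qPochhammer n - qPochhammer m := by
  induction n, h using Nat.le_induction with
  | base => simp
  | succ n hn ih =>
    have hdvd := dvd_sub ih ((pow_dvd_pow X (Nat.succ_le_succ hn)).mul_left (qPochhammer n))
    rwa [show qPochhammer (n + 1) - qPochhammer m =
      qPochhammer n - qPochhammer m - qPochhammer n * X ^ (n + 1) by rw [qPochhammer_succ]; ring]

lemma X_pow_min_dvd_qPochhammer_mul_sub_one (m n : ℕ) :
    X ^ (min m n + 1) ∣ qPochhammer m * invQPochhammer n - 1 := by
  have h : qPochhammer m * invQPochhammer n - 1 =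
      (qPochhammer m - qPochhammer n) * invQPochhammer n := by
    linear_combination qPochhammer_mul_invQPochhammer n
  rw [h]
  refine Dvd.dvd.mul_right ?_ _
  rcases le_total m n with hmn | hnm
  · rw [min_eq_left hmn, dvd_sub_comm]
    exact X_pow_dvd_qPochhammer_sub hmn
  · rw [min_eq_right hnm]
    exact X_pow_dvd_qPochhammer_sub hnm

/-- The sum of `(-1) ^ k q ^ (k ^ 2) / ((q; q)_(n - k) (q; q)_(n + k))` over `-K ≤ k ≤ K`, where
`K ≤ n`, with the terms of index `k` and `-k` combined. For `K = n` it is a finite form of `φ(-q)`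
up to the factor `(q; q)_n ^ 2`. -/
noncomputable def finiteTheta (n K : ℕ) : ℤ⟦X⟧ :=
  invQPochhammer n ^ 2 + 2 * ∑ k ∈ Finset.range K,
    (-1) ^ (k + 1) * X ^ ((k + 1) ^ 2) * invQPochhammer (n - (k + 1)) * invQPochhammer (n + (k + 1))

lemma finiteTheta_succ (n K : ℕ) : finiteTheta n (K + 1) = finiteTheta n K +
    2 * ((-1) ^ (K + 1) * X ^ ((K + 1) ^ 2) *
      invQPochhammer (n - (K + 1)) * invQPochhammer (n + (K + 1))) := by
  rw [finiteTheta, finiteTheta, Finset.sum_range_succ, mul_add, add_assoc]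

lemma one_sub_X_pow_mul_finiteTheta_sub {n K : ℕ} (hK : K ≤ n) :
    (1 - X ^ (2 * (n + 1))) * finiteTheta (n + 1) K - finiteTheta n K =
      2 * (-1) ^ K * X ^ (n + 1 + K ^ 2 + K) * invQPochhammer (n - K) *
        invQPochhammer (n + 1 + K) := by
  induction K with
  | zero =>
    simp only [finiteTheta, Finset.range_zero, Finset.sum_empty, Nat.sub_zero]
    rw [← one_sub_X_pow_mul_invQPochhammer_succ n]
    ring
  | succ K ih =>
    obtain ⟨c, rfl⟩ := Nat.exists_eq_add_of_le hK
    replace ih := ih (by omega)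
    rw [show K + 1 + c - K = c + 1 by omega,
      show K + 1 + c + 1 + K = K + 1 + c + (K + 1) by ring,
      ← one_sub_X_pow_mul_invQPochhammer_succ (K + 1 + c + (K + 1))] at ih
    rw [finiteTheta_succ, finiteTheta_succ, show K + 1 + c + 1 - (K + 1) = c + 1 by omega,
      Nat.add_sub_cancel_left, show K + 1 + c + 1 + (K + 1) = K + 1 + c + (K + 1) + 1 by ring,
      ← one_sub_X_pow_mul_invQPochhammer_succ (K + 1 + c + (K + 1)),
      ← one_sub_X_pow_mul_invQPochhammer_succ c]
    linear_combination ih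

lemma one_sub_X_pow_mul_finiteTheta_self_succ (n : ℕ) :
    (1 - X ^ (2 * (n + 1))) * finiteTheta (n + 1) (n + 1) = finiteTheta n n := by
  have h := one_sub_X_pow_mul_finiteTheta_sub (le_refl n)
  rw [Nat.sub_self, ← one_sub_X_pow_mul_invQPochhammer_succ (n + 1 + n)] at h
  rw [finiteTheta_succ, Nat.sub_self, ← add_assoc (n + 1) n 1]
  linear_combination h

lemma qPochhammer_mul_prod_one_add_X_pow_mul_finiteTheta (n : ℕ) :
    qPochhammer n * (∏ i ∈ Finset.range n, (1 + X ^ (i + 1))) * finiteTheta n n = 1 := by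
  induction n with
  | zero =>
    have h := qPochhammer_mul_invQPochhammer 0
    rw [qPochhammer, Finset.prod_range_zero, one_mul] at h
    simp [qPochhammer, finiteTheta, h]
  | succ n ih =>
    rw [qPochhammer_succ, Finset.prod_range_succ]
    linear_combination ih + qPochhammer n * (∏ i ∈ Finset.range n, (1 + X ^ (i + 1))) *
      one_sub_X_pow_mul_finiteTheta_self_succ n

lemma X_pow_dvd_qPochhammer_sq_mul_finiteTheta_sub (n : ℕ) :
    X ^ (n + 1) ∣ qPochhammer n ^ 2 * finiteTheta n n -
      (1 + ∑ k ∈ Finset.range n, 2 * ((-1) ^ (k + 1) * X ^ ((k + 1) ^ 2))) := by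
  have hsum : qPochhammer n ^ 2 * finiteTheta n n -
      (1 + ∑ k ∈ Finset.range n, 2 * ((-1) ^ (k + 1) * X ^ ((k + 1) ^ 2))) =
      ∑ k ∈ Finset.range n, 2 * (-1) ^ (k + 1) * (X ^ ((k + 1) ^ 2) *
        (qPochhammer n * invQPochhammer (n - (k + 1)) *
          (qPochhammer n * invQPochhammer (n + (k + 1))) - 1)) := by
    have hsplit (k : ℕ) : 2 * (-1) ^ (k + 1) * (X ^ ((k + 1) ^ 2) *
        (qPochhammer n * invQPochhammer (n - (k + 1)) *
          (qPochhammer n * invQPochhammer (n + (k + 1))) - 1)) =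
        qPochhammer n ^ 2 * 2 * ((-1) ^ (k + 1) * X ^ ((k + 1) ^ 2) *
          invQPochhammer (n - (k + 1)) * invQPochhammer (n + (k + 1))) -
        2 * ((-1) ^ (k + 1) * X ^ ((k + 1) ^ 2)) := by ring
    simp only [hsplit, Finset.sum_sub_distrib, ← Finset.mul_sum, finiteTheta]
    linear_combination (qPochhammer n * invQPochhammer n + 1) * qPochhammer_mul_invQPochhammer n
  rw [hsum]
  refine Finset.dvd_sum fun k hk ↦ Dvd.dvd.mul_left ?_ _
  rw [Finset.mem_range] at hk
  have hlow := mul_dvd_mul_left (X ^ ((k + 1) ^ 2))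
    (X_pow_min_dvd_qPochhammer_mul_sub_one n (n - (k + 1)))
  have hhigh := X_pow_min_dvd_qPochhammer_mul_sub_one n (n + (k + 1))
  rw [min_eq_right (Nat.sub_le ..), ← pow_add] at hlow
  rw [min_eq_left (Nat.le_add_right ..)] at hhigh
  have hexp : n + 1 ≤ (k + 1) ^ 2 + (n - (k + 1) + 1) := by
    have := Nat.le_self_pow two_ne_zero (k + 1)
    omega
  convert dvd_add (((pow_dvd_pow X hexp).trans hlow).mul_right
    (qPochhammer n * invQPochhammer (n + (k + 1)))) (hhigh.mul_left (X ^ ((k + 1) ^ 2))) using 1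
  ring

lemma tendsto_one_add_sum_evalNegHom_ramanujanPhi :
    Tendsto (fun n ↦ 1 + ∑ k ∈ Finset.range n, 2 * ((-1) ^ (k + 1) * X ^ ((k + 1) ^ 2))) atTop
      (nhds φ₋) := by
  have h := hasSum_two_mul_natCast_succ_of_even hasSum_evalNegHom_ramanujanPhi fun n ↦ by
    rw [Int.natAbs_neg, Int.negOnePow_neg]
  have hterm (n : ℕ) : (monomial ((n + 1 : ℤ).natAbs ^ 2) ((n + 1 : ℤ).negOnePow : ℤ) : ℤ⟦X⟧) =
      (-1) ^ (n + 1) * X ^ ((n + 1) ^ 2) := by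
    rw [← Nat.cast_add_one, Int.natAbs_natCast, Int.negOnePow_def, zpow_natCast,
      monomial_eq_C_mul_X_pow]
    simp
  simp only [hterm] at h
  simpa using h.tendsto_sum_nat.const_add 1

/-- The product `∏ (1 + c q ^ n)` over `n ≥ 1`. -/
noncomputable def eulerProduct (c : ℤ) : ℤ⟦X⟧ :=
  ∏' i : ℕ, (1 + C c * X ^ (i + 1))

lemma hasProd_eulerProduct (c : ℤ) :
    HasProd (fun i : ℕ ↦ 1 + C c * X ^ (i + 1)) (eulerProduct c) := by
  refine (WithPiTopology.multipliable_one_add_of_tendsto_order_atTop_nhds_top _ ?_).hasProd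
  refine ENat.tendsto_nhds_top_iff_natCast_lt.2 fun n ↦ eventually_atTop.2 ⟨n, fun m hm ↦ ?_⟩
  refine (Nat.cast_lt.2 (Nat.lt_succ_of_le hm)).trans_le (nat_le_order _ _ ?_)
  exact X_pow_dvd_iff.1 (dvd_mul_left _ _)

lemma constantCoeff_eulerProduct (c : ℤ) : constantCoeff (eulerProduct c) = 1 := by
  have h := (hasProd_eulerProduct c).map (constantCoeff (R := ℤ))
    (WithPiTopology.continuous_constantCoeff ℤ)
  rw [← h.tprod_eq]
  simp

lemma eulerProduct_ne_zero (c : ℤ) : eulerProduct c ≠ 0 := by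
  intro h
  simpa [h] using constantCoeff_eulerProduct c

lemma evalNegHom_ramanujanPhi_mul_eulerProduct : φ₋ * eulerProduct 1 = eulerProduct (-1) := by
  have hlim := tendsto_one_add_sum_evalNegHom_ramanujanPhi.mul
    (hasProd_eulerProduct 1).tendsto_prod_nat
  refine tendsto_nhds_unique (tendsto_of_X_pow_dvd_sub hlim fun n ↦ ?_)
    (hasProd_eulerProduct (-1)).tendsto_prod_nat
  have hneg : ∏ i ∈ Finset.range n, (1 + C (-1) * X ^ (i + 1)) = qPochhammer n :=
    Finset.prod_congr rfl fun i _ ↦ by simp [sub_eq_add_neg]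
  simp only [hneg, map_one, one_mul]
  convert (X_pow_dvd_qPochhammer_sq_mul_finiteTheta_sub n).mul_left
    (∏ i ∈ Finset.range n, (1 + X ^ (i + 1))) using 1
  linear_combination -qPochhammer n * qPochhammer_mul_prod_one_add_X_pow_mul_finiteTheta n

end GaussIdentity

lemma constantCoeff_evalNegHom_ramanujanPhi : constantCoeff φ₋ = 1 := by
  obtain ⟨f, hf⟩ := exists_ramanujanPhi_eq_one_add
  simp [hf]

lemma evalNegHom_ramanujanPhi_ne_zero : φ₋ ≠ 0 := by
  intro h
  simpa [h] using constantCoeff_evalNegHom_ramanujanPhi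

lemma exists_ramanujanPhi_sq_eq_one_add : ∃ f, φ ^ 2 = 1 + 4 * f := by
  obtain ⟨f, hf⟩ := exists_ramanujanPhi_eq_one_add
  exact ⟨X * f + X ^ 2 * f ^ 2, by rw [hf]; ring⟩

lemma exists_evalNegHom_ramanujanPhi_sq_eq_one_add : ∃ f, φ₋ ^ 2 = 1 + 4 * f := by
  obtain ⟨f, hf⟩ := exists_ramanujanPhi_sq_eq_one_add
  exact ⟨evalNegHom f, by rw [← map_pow, hf, map_add, map_mul, map_one, map_ofNat]⟩

/-- The `q`-expansion of `(η(4τ) / η(τ)) ^ 8`, a generator of the function field of `X₀(4)`,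
written as `q ψ(q²)⁴ / φ(-q)⁴`. -/
noncomputable def hauptmodulFour : ℤ⟦X⟧ :=
  X * dilate 2 ψ ^ 4 * invOfUnit φ₋ 1 ^ 4

/-- The `q`-expansion of `(η(2τ) / η(τ)) ^ 24`, a generator of the function field of `X₀(2)`,
written as `q ψ(q)⁸ / φ(-q)⁸`. -/
noncomputable def hauptmodulTwo : ℤ⟦X⟧ :=
  X * ψ ^ 8 * invOfUnit φ₋ 1 ^ 8

local notation "h₄" => hauptmodulFour
local notation "h₂" => hauptmodulTwo

lemma hauptmodulFour_mul : h₄ * φ₋ ^ 4 = X * dilate 2 ψ ^ 4 := by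
  have h := invOfUnit_mul φ₋ 1 constantCoeff_evalNegHom_ramanujanPhi
  rw [hauptmodulFour, mul_assoc, ← mul_pow, h, one_pow, mul_one]

lemma hauptmodulTwo_mul : h₂ * φ₋ ^ 8 = X * ψ ^ 8 := by
  have h := invOfUnit_mul φ₋ 1 constantCoeff_evalNegHom_ramanujanPhi
  rw [hauptmodulTwo, mul_assoc, ← mul_pow, h, one_pow, mul_one]

lemma one_add_hauptmodulFour_mul : (1 + 16 * h₄) * φ₋ ^ 4 = φ ^ 4 := by
  linear_combination 16 * hauptmodulFour_mul - ramanujanPhi_pow_four_sub_pow_four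

lemma hauptmodulTwo_eq : h₂ = h₄ + 16 * h₄ ^ 2 := by
  have hψ : φ ^ 4 * dilate 2 ψ ^ 4 = ψ ^ 8 := by
    rw [← mul_pow, ramanujanPhi_mul_dilate_two_ramanujanPsi, ← pow_mul]
  refine mul_right_cancel₀ (pow_ne_zero 8 evalNegHom_ramanujanPhi_ne_zero) ?_
  linear_combination hauptmodulTwo_mul - X * hψ - φ ^ 4 * hauptmodulFour_mul -
    h₄ * φ₋ ^ 4 * one_add_hauptmodulFour_mul

lemma hauptmodulFour_sq : h₄ ^ 2 = dilate 2 h₂ * (1 + 16 * h₄) := by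
  have hdilate := congrArg (dilate 2) hauptmodulTwo_mul
  have hφ : φ ^ 4 * φ₋ ^ 4 = dilate 2 φ₋ ^ 8 := by
    rw [← mul_pow, ramanujanPhi_mul_evalNegHom, ← pow_mul]
  simp only [map_mul, map_pow, expand_X] at hdilate
  refine mul_right_cancel₀ (pow_ne_zero 8 evalNegHom_ramanujanPhi_ne_zero) ?_
  linear_combination (h₄ * φ₋ ^ 4 + X * dilate 2 ψ ^ 4) * hauptmodulFour_mul - hdilate -
    dilate 2 h₂ * φ₋ ^ 4 * one_add_hauptmodulFour_mul - dilate 2 h₂ * hφ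

lemma atkinU_two_hauptmodulFour : atkinU 2 h₄ = 8 * h₂ := by
  have hφ : dilate 2 (φ₋ ^ 8) * h₄ = dilate 2 (ψ ^ 4) * (X * φ ^ 4) := by
    rw [map_pow, map_pow, show dilate 2 φ₋ ^ 8 = (dilate 2 φ₋ ^ 2) ^ 4 by ring,
      ← ramanujanPhi_mul_evalNegHom]
    linear_combination φ ^ 4 * hauptmodulFour_mul
  have hX : X * φ ^ 4 = X * dilate 2 (φ ^ 4 + 16 * X * dilate 2 ψ ^ 4) +
      dilate 2 (X * (8 * ψ ^ 4)) * 1 := by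
    conv_lhs => rw [ramanujanPhi_pow_four]
    rw [map_mul (dilate 2) X, expand_X]
    ring
  have hU := congrArg (atkinU 2) hφ
  rw [atkinU_dilate_mul, atkinU_dilate_mul, hX, map_add, atkinU_X_mul_dilate (by decide),
    atkinU_dilate_mul, atkinU_one] at hU
  refine mul_right_cancel₀ (pow_ne_zero 8 evalNegHom_ramanujanPhi_ne_zero) ?_
  linear_combination hU - 8 * hauptmodulTwo_mul

lemma atkinU_two_hauptmodulTwo : atkinU 2 h₂ = 24 * h₂ + 2048 * h₂ ^ 2 := by
  have hsq : atkinU 2 (h₄ ^ 2) = h₂ * (1 + 16 * (8 * h₂)) := by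
    rw [hauptmodulFour_sq, atkinU_dilate_mul, map_add, atkinU_one, atkinU_ofNat_mul,
      atkinU_two_hauptmodulFour]
  have h := congrArg (atkinU 2) hauptmodulTwo_eq
  rw [map_add, atkinU_ofNat_mul, hsq, atkinU_two_hauptmodulFour] at h
  linear_combination h

/-- The modular equation of degree two for `(η(2τ) / η(τ)) ^ 24`. -/
lemma hauptmodulTwo_sq : h₂ ^ 2 = dilate 2 (48 * h₂ + 4096 * h₂ ^ 2) * h₂ + dilate 2 h₂ := by
  simp only [map_add, map_mul, map_pow, map_ofNat]
  linear_combination (h₂ + h₄ + 16 * h₄ ^ 2 - 48 * dilate 2 h₂ - 4096 * dilate 2 h₂ ^ 2) *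
    hauptmodulTwo_eq + (256 * h₄ ^ 2 + (32 + 4096 * dilate 2 h₂) * h₄ + 1) * hauptmodulFour_sq

/-- The factor `256` makes every coefficient divisible by `8`, because `U₂` sends `h₂ * y ^ (n + 2)`
to `(48 * y + 16 * y ^ 2) * U₂ (h₂ * y ^ (n + 1)) + 256 * y * U₂ (h₂ * y ^ n)` for `y = 256 * h₂`,
by the modular equation. -/
lemma exists_atkinU_two_hauptmodulTwo_mul_pow (n : ℕ) : ∃ q : Polynomial ℤ,
    atkinU 2 (h₂ * (256 * h₂) ^ n) = 8 * (h₂ * q.aeval (256 * h₂)) := by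
  induction n using Nat.twoStepInduction with
  | zero =>
    refine ⟨3 + .X, ?_⟩
    rw [pow_zero, mul_one, atkinU_two_hauptmodulTwo, map_add, map_ofNat, Polynomial.aeval_X]
    ring
  | one =>
    refine ⟨48 * .X * (3 + .X) + 16 * .X ^ 2 * (3 + .X) + 32, ?_⟩
    have h : h₂ * (256 * h₂) ^ 1 = 256 * (dilate 2 (48 * h₂ + 4096 * h₂ ^ 2) * h₂) +
        256 * (dilate 2 h₂ * 1) := by
      linear_combination 256 * hauptmodulTwo_sq
    rw [h, map_add, atkinU_ofNat_mul, atkinU_ofNat_mul, atkinU_dilate_mul, atkinU_dilate_mul,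
      atkinU_one, atkinU_two_hauptmodulTwo]
    simp only [map_add, map_mul, map_pow, map_ofNat, Polynomial.aeval_X]
    ring
  | more n ih₀ ih₁ =>
    obtain ⟨p, hp⟩ := ih₀
    obtain ⟨q, hq⟩ := ih₁
    refine ⟨(48 * .X + 16 * .X ^ 2) * q + 256 * .X * p, ?_⟩
    have h : h₂ * (256 * h₂) ^ (n + 2) =
        dilate 2 (48 * (256 * h₂) + 16 * (256 * h₂) ^ 2) * (h₂ * (256 * h₂) ^ (n + 1)) +
          dilate 2 (256 * (256 * h₂)) * (h₂ * (256 * h₂) ^ n) := by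
      have hsq := hauptmodulTwo_sq
      simp only [map_add, map_mul, map_pow, map_ofNat] at hsq ⊢
      linear_combination 256 ^ 2 * (h₂ * (256 * h₂) ^ n) * hsq
    rw [h, map_add, atkinU_dilate_mul, atkinU_dilate_mul, hp, hq]
    simp only [map_add, map_mul, map_pow, map_ofNat, Polynomial.aeval_X]
    ring

lemma exists_atkinU_two_hauptmodulTwo_mul_aeval (p : Polynomial ℤ) : ∃ q : Polynomial ℤ,
    atkinU 2 (h₂ * p.aeval (256 * h₂)) = 8 * (h₂ * q.aeval (256 * h₂)) := by
  induction p using Polynomial.induction_on' with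
  | add p₁ p₂ ih₁ ih₂ =>
    obtain ⟨q₁, hq₁⟩ := ih₁
    obtain ⟨q₂, hq₂⟩ := ih₂
    exact ⟨q₁ + q₂, by rw [map_add, mul_add, map_add, hq₁, hq₂, map_add]; ring⟩
  | monomial n a =>
    obtain ⟨q, hq⟩ := exists_atkinU_two_hauptmodulTwo_mul_pow n
    refine ⟨a • q, ?_⟩
    rw [Polynomial.aeval_monomial, ← Algebra.smul_def, mul_smul_comm, map_smul, hq, map_smul,
      mul_smul_comm, mul_smul_comm]

lemma exists_atkinU_two_iterate_hauptmodulTwo (j : ℕ) : ∃ q : Polynomial ℤ,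
    (atkinU 2)^[j] h₂ = 8 ^ j * (h₂ * q.aeval (256 * h₂)) := by
  induction j with
  | zero => exact ⟨1, by simp⟩
  | succ j ih =>
    obtain ⟨p, hp⟩ := ih
    obtain ⟨q, hq⟩ := exists_atkinU_two_hauptmodulTwo_mul_aeval p
    refine ⟨q, ?_⟩
    have hpow := atkinU_natCast_mul 2 (8 ^ j) (h₂ * p.aeval (256 * h₂))
    push_cast at hpow
    rw [Function.iterate_succ_apply', hp, hpow, hq]
    ring

lemma exists_hauptmodulFour_eq_add : ∃ f, h₄ = X * dilate 4 ψ ^ 2 + 4 * f := by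
  have hψ := congrArg (dilate 2) ramanujanPhi_mul_dilate_two_ramanujanPsi
  simp only [map_mul, map_pow, dilate_dilate, Nat.reduceMul] at hψ
  obtain ⟨a, ha⟩ := exists_evalNegHom_ramanujanPhi_sq_eq_one_add
  obtain ⟨b, hb⟩ := exists_ramanujanPhi_sq_eq_one_add
  replace hb := congrArg (dilate 2) hb
  rw [map_pow, map_add, map_mul, map_one, map_ofNat] at hb
  refine ⟨X * dilate 2 b * dilate 4 ψ ^ 2 - h₄ * (2 * a + 4 * a ^ 2), ?_⟩
  linear_combination hauptmodulFour_mul - h₄ * (φ₋ ^ 2 + 1 + 4 * a) * ha +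
    X * dilate 4 ψ ^ 2 * hb - X * (dilate 2 ψ ^ 2 + dilate 2 φ * dilate 4 ψ) * hψ

lemma exists_hauptmodulTwo_eq_add : ∃ f, h₂ = X * dilate 4 ψ ^ 2 + 4 * f := by
  obtain ⟨f, hf⟩ := exists_hauptmodulFour_eq_add
  exact ⟨f + 4 * h₄ ^ 2, by linear_combination hauptmodulTwo_eq + hf⟩

lemma exists_atkinU_two_iterate_hauptmodulTwo_eq_add (j : ℕ) : ∃ (c : ℤ) (f : ℤ⟦X⟧),
    (atkinU 2)^[j] h₂ = 8 ^ j * (C c * (X * dilate 4 ψ ^ 2) + 4 * f) := by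
  obtain ⟨q, hq⟩ := exists_atkinU_two_iterate_hauptmodulTwo j
  obtain ⟨f, hf⟩ := exists_hauptmodulTwo_eq_add
  have hdiv := congrArg (Polynomial.aeval (256 * h₂)) q.divX_mul_X_add
  rw [map_add, map_mul, Polynomial.aeval_X, Polynomial.aeval_C, PowerSeries.algebraMap_apply,
    Algebra.algebraMap_self_apply] at hdiv
  refine ⟨q.coeff 0, C (q.coeff 0) * f + 64 * h₂ ^ 2 * q.divX.aeval (256 * h₂), ?_⟩
  rw [hq, ← hdiv]
  linear_combination 8 ^ j * C (q.coeff 0) * hf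

lemma coeff_X_mul_dilate_four_ramanujanPsi_sq_of_three (n : ℕ) :
    coeff (4 * n + 3) (X * dilate 4 ψ ^ 2) = 0 := by
  rw [← map_pow, show 4 * n + 3 = 4 * n + 2 + 1 by ring, coeff_succ_X_mul, coeff_expand,
    if_neg (by omega)]

lemma two_dvd_coeff_X_mul_dilate_four_ramanujanPsi_sq (n : ℕ) :
    2 ∣ coeff (8 * n + 5) (X * dilate 4 ψ ^ 2) := by
  obtain ⟨f, hf⟩ := exists_ramanujanPhi_eq_one_add
  rw [← map_pow, show 8 * n + 5 = 4 * (2 * n + 1) + 1 by ring, coeff_succ_X_mul,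
    coeff_expand_mul, ← ramanujanPhi_mul_dilate_two_ramanujanPsi, hf, add_mul, one_mul, map_add,
    coeff_expand, if_neg (by omega), zero_add, ← map_ofNat (C (R := ℤ)) 2, mul_assoc, mul_assoc,
    coeff_C_mul]
  exact dvd_mul_right _ _

section ThetaQuotient

variable {F : ℤ⟦X⟧}

lemma atkinU_two_mul_evalNegHom_ramanujanPhi
    (hF : F * (φ₋ * dilate 12 φ₋) = dilate 4 φ₋ * dilate 3 φ₋) : atkinU 2 F * φ₋ = φ := by
  have hφ : dilate 2 (φ₋ ^ 2 * dilate 6 φ₋) * F = dilate 2 (dilate 2 φ₋) * (φ * dilate 3 φ₋) := by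
    simp only [map_mul, map_pow, dilate_dilate, Nat.reduceMul]
    linear_combination φ * hF - F * dilate 12 φ₋ * ramanujanPhi_mul_evalNegHom
  have hU := congrArg (atkinU 2) hφ
  rw [atkinU_dilate_mul, atkinU_dilate_mul, atkinU_two_ramanujanPhi_mul_dilate_three, map_mul,
    dilate_dilate] at hU
  have h₆ : dilate 6 φ₋ ≠ 0 :=
    (map_ne_zero_iff _ (dilate_injective 6)).2 evalNegHom_ramanujanPhi_ne_zero
  refine mul_right_cancel₀ (mul_ne_zero evalNegHom_ramanujanPhi_ne_zero h₆) ?_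
  linear_combination hU - dilate 6 φ₋ * ramanujanPhi_mul_evalNegHom

lemma atkinU_two_mul_evalNegHom_ramanujanPhi_sq (hF : F * φ₋ = φ) :
    atkinU 2 F * φ₋ ^ 2 = φ ^ 2 := by
  have hφ : dilate 2 (φ₋ ^ 2) * F = φ ^ 2 := by
    rw [map_pow, ← ramanujanPhi_mul_evalNegHom]
    linear_combination φ * hF
  rw [mul_comm, ← atkinU_dilate_mul, hφ, atkinU_two_ramanujanPhi_sq]

lemma atkinU_two_eq_one_add_hauptmodulFour (hF : F * φ₋ ^ 2 = φ ^ 2) :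
    atkinU 2 F = 1 + 32 * h₄ := by
  have hφ : dilate 2 (φ₋ ^ 4) * F =
      dilate 2 (φ ^ 4 + 16 * X * dilate 2 ψ ^ 4) * 1 + X * dilate 2 (8 * ψ ^ 4) := by
    rw [mul_one, ← ramanujanPhi_pow_four, map_pow,
      show dilate 2 φ₋ ^ 4 = (dilate 2 φ₋ ^ 2) ^ 2 by ring, ← ramanujanPhi_mul_evalNegHom]
    linear_combination φ ^ 2 * hF
  have hU := congrArg (atkinU 2) hφ
  rw [map_add, atkinU_dilate_mul, atkinU_dilate_mul, atkinU_one,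
    atkinU_X_mul_dilate (by decide)] at hU
  refine mul_right_cancel₀ (pow_ne_zero 4 evalNegHom_ramanujanPhi_ne_zero) ?_
  linear_combination hU + ramanujanPhi_pow_four_sub_pow_four - 32 * hauptmodulFour_mul

lemma atkinU_two_iterate_one_add_hauptmodulFour (j : ℕ) :
    (atkinU 2)^[j + 1] (1 + 32 * h₄) = 1 + 256 * (atkinU 2)^[j] h₂ := by
  induction j with
  | zero =>
    rw [Function.iterate_one, Function.iterate_zero_apply, map_add, atkinU_one,
      atkinU_ofNat_mul, atkinU_two_hauptmodulFour]
    ring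
  | succ j ih =>
    rw [Function.iterate_succ_apply', ih, map_add, atkinU_one, atkinU_ofNat_mul,
      Function.iterate_succ_apply']

lemma exists_eq_one_add_two_mul (hF : F * φ₋ = φ) : ∃ f, F = 1 + 2 * f := by
  obtain ⟨f, hf⟩ := exists_ramanujanPhi_eq_one_add
  refine ⟨X * f - F * evalNegHom (X * f), ?_⟩
  have h : φ₋ = 1 + 2 * evalNegHom (X * f) := by
    rw [hf, mul_assoc, map_add, map_mul, map_one, map_ofNat]
  linear_combination hF - F * h + hf

lemma exists_eq_one_add_eight_mul (hF : F * φ₋ ^ 2 = φ ^ 2) :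
    ∃ f, F = 1 + 8 * (X * dilate 4 ψ ^ 2 + 4 * f) := by
  obtain ⟨f, hf⟩ := exists_evalNegHom_ramanujanPhi_sq_eq_one_add
  refine ⟨-f * (X * dilate 4 ψ ^ 2 - 2 * f * (2 * (X * dilate 4 ψ ^ 2) - f * (F - 1))), ?_⟩
  linear_combination (1 - 4 * f + 16 * f ^ 2) * (hF + ramanujanPhi_sq_sub_sq - (F - 1) * hf)

lemma exists_atkinU_two_iterate_eq_one_add
    (hF : F * (φ₋ * dilate 12 φ₋) = dilate 4 φ₋ * dilate 3 φ₋) (k : ℕ) :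
    ∃ (c : ℤ) (f : ℤ⟦X⟧),
      (atkinU 2)^[k + 2] F = 1 + 2 ^ (3 * k + 2) * (C c * (X * dilate 4 ψ ^ 2) + 4 * f) := by
  have hU₂ := atkinU_two_mul_evalNegHom_ramanujanPhi_sq (atkinU_two_mul_evalNegHom_ramanujanPhi hF)
  have hU₃ := atkinU_two_eq_one_add_hauptmodulFour hU₂
  match k with
  | 0 =>
    obtain ⟨f, hf⟩ := exists_eq_one_add_eight_mul hU₂
    refine ⟨2, 2 * f, hf.trans ?_⟩
    rw [map_ofNat]
    ring
  | 1 =>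
    obtain ⟨f, hf⟩ := exists_hauptmodulFour_eq_add
    refine ⟨1, f, hU₃.trans ?_⟩
    rw [hf, map_one]
    ring
  | j + 2 =>
    obtain ⟨c, f, hf⟩ := exists_atkinU_two_iterate_hauptmodulTwo_eq_add j
    refine ⟨c, f, ?_⟩
    rw [show j + 2 + 2 = j + 1 + 3 by ring, Function.iterate_add_apply]
    change (atkinU 2)^[j + 1] (atkinU 2 (atkinU 2 (atkinU 2 F))) = _
    rw [hU₃, atkinU_two_iterate_one_add_hauptmodulFour, hf,
      show (8 : ℤ⟦X⟧) = 2 ^ 3 by norm_num, ← pow_mul]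
    ring

lemma exists_coeff_two_pow_mul (hF : F * (φ₋ * dilate 12 φ₋) = dilate 4 φ₋ * dilate 3 φ₋)
    (k : ℕ) : ∃ c : ℤ, ∀ n ≠ 0, ∃ a : ℤ, coeff (2 ^ (k + 2) * n) F =
      2 ^ (3 * k + 2) * (c * coeff n (X * dilate 4 ψ ^ 2) + 4 * a) := by
  obtain ⟨c, f, hf⟩ := exists_atkinU_two_iterate_eq_one_add hF k
  refine ⟨c, fun n hn ↦ ⟨coeff n f, ?_⟩⟩
  have h2 : (2 ^ (3 * k + 2) : ℤ⟦X⟧) = C (2 ^ (3 * k + 2)) := by rw [map_pow, map_ofNat]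
  rw [← coeff_atkinU_iterate, hf, h2, map_add, coeff_one, if_neg hn, zero_add, coeff_C_mul,
    map_add, coeff_C_mul, ← map_ofNat (C (R := ℤ)) 4, coeff_C_mul]

lemma two_dvd_coeff_two_mul (hF : F * (φ₋ * dilate 12 φ₋) = dilate 4 φ₋ * dilate 3 φ₋) {n : ℕ}
    (hn : n ≠ 0) : 2 ∣ coeff (2 * n) F := by
  obtain ⟨f, hf⟩ := exists_eq_one_add_two_mul (atkinU_two_mul_evalNegHom_ramanujanPhi hF)
  rw [← coeff_atkinU, hf, map_add, coeff_one, if_neg hn, zero_add, ← map_ofNat (C (R := ℤ)) 2,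
    coeff_C_mul]
  exact dvd_mul_right _ _

lemma two_pow_dvd_coeff_two_pow_mul
    (hF : F * (φ₋ * dilate 12 φ₋) = dilate 4 φ₋ * dilate 3 φ₋) (k : ℕ) {n : ℕ} (hn : n ≠ 0) :
    2 ^ (3 * k + 2) ∣ coeff (2 ^ (k + 2) * n) F := by
  obtain ⟨c, hc⟩ := exists_coeff_two_pow_mul hF k
  obtain ⟨a, ha⟩ := hc n hn
  exact ⟨_, ha⟩

lemma two_pow_dvd_coeff_two_pow_mul_four_mul_add_three
    (hF : F * (φ₋ * dilate 12 φ₋) = dilate 4 φ₋ * dilate 3 φ₋) (k n : ℕ) :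
    2 ^ (3 * k + 1) ∣ coeff (2 ^ (k + 1) * (4 * n + 3)) F := by
  cases k with
  | zero => exact two_dvd_coeff_two_mul hF (Nat.succ_ne_zero _)
  | succ k =>
    obtain ⟨c, hc⟩ := exists_coeff_two_pow_mul hF k
    obtain ⟨a, ha⟩ := hc (4 * n + 3) (Nat.succ_ne_zero _)
    rw [coeff_X_mul_dilate_four_ramanujanPsi_sq_of_three] at ha
    exact ⟨a, ha.trans (by ring)⟩

lemma two_pow_dvd_coeff_two_pow_mul_eight_mul_add_five
    (hF : F * (φ₋ * dilate 12 φ₋) = dilate 4 φ₋ * dilate 3 φ₋) (k n : ℕ) :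
    2 ^ (3 * k) ∣ coeff (2 ^ (k + 1) * (8 * n + 5)) F := by
  cases k with
  | zero => exact one_dvd _
  | succ k =>
    obtain ⟨c, hc⟩ := exists_coeff_two_pow_mul hF k
    obtain ⟨a, ha⟩ := hc (8 * n + 5) (Nat.succ_ne_zero _)
    obtain ⟨b, hb⟩ := two_dvd_coeff_X_mul_dilate_four_ramanujanPsi_sq n
    exact ⟨c * b + 2 * a, ha.trans (by rw [hb]; ring)⟩

end ThetaQuotient

section GeneratingFunction

lemma hasProd_dilate_of_hasProd_one_add {R : Type*} [CommRing R] [TopologicalSpace R] (m : ℕ)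
    [NeZero m] {c : R} {f : R⟦X⟧} (hf : HasProd (fun i : ℕ ↦ 1 + C c * X ^ (i + 1)) f) :
    HasProd (fun i : ℕ ↦ if m ∣ i + 1 then 1 + C c * X ^ (i + 1) else 1) (dilate m f) := by
  have hm (i : ℕ) : m * (i + 1) - 1 + 1 = m * (i + 1) :=
    Nat.sub_add_cancel (Nat.mul_pos (Nat.pos_of_neZero m) i.succ_pos)
  have hinj : Function.Injective fun i : ℕ ↦ m * (i + 1) - 1 := by
    intro i j hij
    have h : m * (i + 1) = m * (j + 1) := by rw [← hm i, ← hm j, Nat.succ_inj]; exact hij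
    exact Nat.succ_injective (Nat.eq_of_mul_eq_mul_left (Nat.pos_of_neZero m) h)
  refine (hinj.hasProd_iff fun i hi ↦ if_neg fun h ↦ hi ?_).1
    ((hf.map (dilate m) (continuous_dilate m)).congr_fun fun i ↦ ?_)
  · obtain ⟨_ | j, hj⟩ := h
    · omega
    · exact ⟨j, by dsimp only; omega⟩
  · simp only [Function.comp_apply, hm, dvd_mul_right, if_true, map_add, map_one, map_mul, map_pow,
      expand_C, expand_X, pow_mul]

lemma hasProd_powerSeriesMk_card_distincts_inter_restricted (R : Type*) [CommSemiring R]
    [TopologicalSpace R] [T2Space R] (p : ℕ → Prop) [DecidablePred p] :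
    HasProd (fun i : ℕ ↦ if p (i + 1) then 1 + X ^ (i + 1) else 1)
      (mk fun n ↦ ((Nat.Partition.distincts n ∩ Nat.Partition.restricted n p).card : R)) := by
  convert! Nat.Partition.hasProd_genFun (fun i c ↦ if p i ∧ c < 2 then (1 : R) else 0) using 1
  · ext1 i
    rw [tsum_eq_single 0 fun j hj ↦ by rw [if_neg (by omega), zero_smul]]
    split_ifs <;> simp_all
  · ext n
    simp only [coeff_mk, Nat.Partition.coeff_genFun, Nat.Partition.distincts,
      Nat.Partition.restricted, ← Finset.filter_and, Finset.card_filter, Finsupp.prod,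
      Finset.prod_boole, Nat.cast_sum, Nat.cast_ite, Nat.cast_one, Nat.cast_zero]
    refine Finset.sum_congr rfl fun d _ ↦ if_congr ?_ rfl rfl
    simp only [Multiset.toFinsupp_support, Multiset.mem_toFinset, Multiset.toFinsupp_apply,
      Multiset.nodup_iff_count_le_one]
    refine ⟨fun h i hi ↦ ⟨h.2 i hi, Nat.lt_succ_of_le (h.1 i)⟩,
      fun h ↦ ⟨fun i ↦ ?_, fun i hi ↦ (h i hi).1⟩⟩
    by_cases hi : i ∈ d.parts
    · exact Nat.le_of_lt_succ (h i hi).2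
    · rw [Multiset.count_eq_zero_of_notMem hi]
      exact zero_le_one

lemma mk_Rbar_eq_mul (ℓ μ : ℕ) : mk (fun n ↦ (Rbar ℓ μ n : ℤ)) =
    mk (fun n ↦ (regularCount ℓ μ n : ℤ)) * mk fun n ↦ (regularDistinctCount ℓ μ n : ℤ) := by
  ext n
  simp only [coeff_mk, coeff_mul, Rbar, Nat.cast_sum, Nat.cast_mul]

variable {ℓ μ m : ℕ} [NeZero ℓ] [NeZero μ] [NeZero m]

lemma mk_regularCount_mul_eulerProduct (hm : ℓ.lcm μ = m) :
    mk (fun n ↦ (regularCount ℓ μ n : ℤ)) * (eulerProduct (-1) * dilate m (eulerProduct (-1))) =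
      dilate ℓ (eulerProduct (-1)) * dilate μ (eulerProduct (-1)) := by
  have hcount (n : ℕ) : regularCount ℓ μ n =
      (Nat.Partition.restricted n fun i ↦ ¬ℓ ∣ i ∧ ¬μ ∣ i).card := Fintype.card_subtype _
  simp only [hcount]
  have hprod := hasProd_eulerProduct (-1)
  refine ((Nat.Partition.hasProd_powerSeriesMk_card_restricted ℤ _).mul
    (hprod.mul (hasProd_dilate_of_hasProd_one_add m hprod))).unique
    (((hasProd_dilate_of_hasProd_one_add ℓ hprod).mul
      (hasProd_dilate_of_hasProd_one_add μ hprod)).congr_fun fun i ↦ ?_)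
  have hgeom : (∑' j : ℕ, (X : ℤ⟦X⟧) ^ ((i + 1) * j)) * (1 - X ^ (i + 1)) = 1 := by
    simp only [pow_mul]
    exact WithPiTopology.tsum_pow_mul_one_sub_of_constantCoeff_eq_zero (by simp)
  subst hm
  by_cases hℓ : ℓ ∣ i + 1 <;> by_cases hμ : μ ∣ i + 1 <;>
    simp [hℓ, hμ, Nat.lcm_dvd_iff, ← sub_eq_add_neg, hgeom]

lemma mk_regularDistinctCount_mul_eulerProduct (hm : ℓ.lcm μ = m) :
    mk (fun n ↦ (regularDistinctCount ℓ μ n : ℤ)) *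
        (dilate ℓ (eulerProduct 1) * dilate μ (eulerProduct 1)) =
      eulerProduct 1 * dilate m (eulerProduct 1) := by
  have hcount (n : ℕ) : regularDistinctCount ℓ μ n = (Nat.Partition.distincts n ∩
      Nat.Partition.restricted n fun i ↦ ¬ℓ ∣ i ∧ ¬μ ∣ i).card := by
    rw [regularDistinctCount, Fintype.card_subtype, Nat.Partition.distincts,
      Nat.Partition.restricted, Finset.filter_and]
  simp only [hcount]
  have hprod := hasProd_eulerProduct 1
  refine ((hasProd_powerSeriesMk_card_distincts_inter_restricted ℤ _).mul
    ((hasProd_dilate_of_hasProd_one_add ℓ hprod).mul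
      (hasProd_dilate_of_hasProd_one_add μ hprod))).unique
    ((hprod.mul (hasProd_dilate_of_hasProd_one_add m hprod)).congr_fun fun i ↦ ?_)
  subst hm
  by_cases hℓ : ℓ ∣ i + 1 <;> by_cases hμ : μ ∣ i + 1 <;> simp [hℓ, hμ, Nat.lcm_dvd_iff]

lemma mk_Rbar_mul_evalNegHom_ramanujanPhi (hm : ℓ.lcm μ = m) :
    mk (fun n ↦ (Rbar ℓ μ n : ℤ)) * (φ₋ * dilate m φ₋) = dilate ℓ φ₋ * dilate μ φ₋ := by
  have hgauss (a : ℕ) [NeZero a] :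
      dilate a φ₋ * dilate a (eulerProduct 1) = dilate a (eulerProduct (-1)) := by
    rw [← map_mul, evalNegHom_ramanujanPhi_mul_eulerProduct]
  have hcount := mk_regularCount_mul_eulerProduct hm
  have hdistinct := mk_regularDistinctCount_mul_eulerProduct hm
  rw [← hgauss ℓ, ← hgauss μ, ← hgauss m, ← evalNegHom_ramanujanPhi_mul_eulerProduct] at hcount
  have hne : eulerProduct 1 * dilate m (eulerProduct 1) ≠ 0 :=
    mul_ne_zero (eulerProduct_ne_zero 1)
      ((map_ne_zero_iff _ (dilate_injective m)).2 (eulerProduct_ne_zero 1))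
  rw [mk_Rbar_eq_mul]
  refine mul_right_cancel₀ hne ?_
  linear_combination mk (fun n ↦ (regularDistinctCount ℓ μ n : ℤ)) * hcount +
    dilate ℓ φ₋ * dilate μ φ₋ * hdistinct

end GeneratingFunction

end ThetaFunctions

theorem Rbar_four_three_high_powers_of_two_general (k : ℕ) :
    (∀ n : ℕ, 1 ≤ n → Rbar 4 3 (2 ^ (k + 2) * n) ≡ 0 [MOD 2 ^ (3 * k + 2)]) ∧
    (∀ n : ℕ, Rbar 4 3 (2 ^ (k + 1) * (4 * n + 3)) ≡ 0 [MOD 2 ^ (3 * k + 1)]) ∧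
    (∀ n : ℕ, Rbar 4 3 (2 ^ (k + 1) * (8 * n + 5)) ≡ 0 [MOD 2 ^ (3 * k)]) := by
  have hgen := mk_Rbar_mul_evalNegHom_ramanujanPhi (ℓ := 4) (μ := 3) (m := 12) rfl
  have hmod {j N : ℕ} (h : (2 ^ j : ℤ) ∣ coeff N (mk fun n ↦ (Rbar 4 3 n : ℤ))) :
      Rbar 4 3 N ≡ 0 [MOD 2 ^ j] := by
    rw [coeff_mk] at h
    exact Nat.modEq_zero_iff_dvd.2 (by exact_mod_cast h)
  exact ⟨fun n hn ↦ hmod (two_pow_dvd_coeff_two_pow_mul hgen k (Nat.one_le_iff_ne_zero.1 hn)),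
    fun n ↦ hmod (two_pow_dvd_coeff_two_pow_mul_four_mul_add_three hgen k n),
    fun n ↦ hmod (two_pow_dvd_coeff_two_pow_mul_eight_mul_add_five hgen k n)⟩

theorem Rbar_four_three_high_powers_of_two (k : ℕ) (hk : 4 ≤ k) :
    (∀ n : ℕ, 1 ≤ n → Rbar 4 3 (2 ^ (k + 2) * n) ≡ 0 [MOD 2 ^ (3 * k + 2)]) ∧
    (∀ n : ℕ, Rbar 4 3 (2 ^ (k + 1) * (4 * n + 3)) ≡ 0 [MOD 2 ^ (3 * k + 1)]) ∧
    (∀ n : ℕ, Rbar 4 3 (2 ^ (k + 1) * (8 * n + 5)) ≡ 0 [MOD 2 ^ (3 * k)]) :=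
  Rbar_four_three_high_powers_of_two_general k
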